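/- arXiv:1611.05248 — 2 statements merged into one kernel-verified Lean document; each statement's English description precedes it below -/
import Mathlib

section
/- Let G be a finite simple graph on vertex set V, partitioned into activated vertices V_on and deactivated vertices V_off, and let G_on = G[V_on] be the induced subgraph on the activated vertices. Let I ⊆ V_off be a set of vertices which is activated. Let u and v be two vertices of V_on that are not connected in G_on, and let C_u and C_v be their (distinct) connected components in G_on. Then u and v are connected (joined by a path) in the induced subgraph G[V_on ∪ I] if and only if C_u and C_v are connected by the set I. -/
/-!
Follow a walk of `G[Von ∪ I]` from `u` and record how the component `C` of `u` in `G[Von]` is tied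
to the current vertex: a vertex outside `Von` ends a sequence in `I` starting next to `C`, while the
component of a vertex in `Von` either still is `C` or is connected to `C` by `I`. An edge inside
`Von` stays in one component, an edge that enters or leaves a component makes it adjacent to a
vertex of `I`, and an edge outside `Von` extends the sequence, so every edge preserves this
invariant. Conversely, each step of a sequence in `I` is realised in `G[Von ∪ I]` by an edge or by a
detour through a component of `G[Von]`.
-/

open SimpleGraph

variable {V : Type*}

/-- A vertex `w` is adjacent to a connected component `C` of the induced subgraph
`G[Von]` if some vertex of `C` is joined to `w` by an edge of `G`. -/
def adjComp (G : SimpleGraph V) (Von : Set V) (w : V)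
    (C : (G.induce Von).ConnectedComponent) : Prop :=
  ∃ x : Von, (G.induce Von).connectedComponentMk x = C ∧ G.Adj ↑x w

/-- Two vertices `x` and `y` are connected via a connected component of `G[Von]`
if there is a component of `G[Von]` adjacent to both, or `(x,y)` is an edge of `G`. -/
def connViaComp (G : SimpleGraph V) (Von : Set V) (x y : V) : Prop :=
  (∃ C, adjComp G Von x C ∧ adjComp G Von y C) ∨ G.Adj x y

/-- Two connected components `C₁`, `C₂` of `G[Von]` are connected by the set `I`
if there is a sequence `v₀, …, v_k` of vertices of `I` with `v₀` adjacent to `C₁`,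
`v_k` adjacent to `C₂`, and consecutive vertices connected via a connected component. -/
def connBySet (G : SimpleGraph V) (Von I : Set V)
    (C₁ C₂ : (G.induce Von).ConnectedComponent) : Prop :=
  ∃ (k : ℕ) (v : Fin (k + 1) → V),
    (∀ i, v i ∈ I) ∧
    adjComp G Von (v 0) C₁ ∧
    adjComp G Von (v (Fin.last k)) C₂ ∧
    ∀ i : Fin k, connViaComp G Von (v i.castSucc) (v i.succ)

theorem reflTransGen_iff_exists_fin {α : Type*} {r : α → α → Prop} {a b : α} :
    Relation.ReflTransGen r a b ↔ ∃ (k : ℕ) (v : Fin (k + 1) → α),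
      v 0 = a ∧ v (Fin.last k) = b ∧ ∀ i : Fin k, r (v i.castSucc) (v i.succ) := by
  constructor
  · intro h
    induction h using Relation.ReflTransGen.head_induction_on with
    | refl => exact ⟨0, fun _ => b, rfl, rfl, fun i => i.elim0⟩
    | @head a c hac _ ih =>
      obtain ⟨k, v, rfl, hlast, hstep⟩ := ih
      exact ⟨k + 1, Fin.cons a v, rfl, hlast, Fin.cases hac hstep⟩
  · rintro ⟨k, v, rfl, rfl, hstep⟩
    have reach : ∀ i, Relation.ReflTransGen r (v 0) (v i) :=
      Fin.induction .refl fun i ih => ih.tail (hstep i)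
    exact reach (Fin.last k)

/-- A vertex `w` of `I` is linked to a component `C` of `G[Von]` if a sequence of vertices of `I`,
starting at a vertex adjacent to `C` and with consecutive vertices connected via a component, ends
at `w`. This is `connBySet` without its last condition, so that it can be extended one vertex at a
time. -/
def LinkedBy (G : SimpleGraph V) (Von : Set V) {I : Set V}
    (C : (G.induce Von).ConnectedComponent) (w : I) : Prop :=
  ∃ a : I, adjComp G Von a C ∧
    Relation.ReflTransGen (fun x y : I => connViaComp G Von x y) a w

section Linked

variable {G : SimpleGraph V} {Von I : Set V} {C C' : (G.induce Von).ConnectedComponent}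

theorem connBySet_iff_exists_linkedBy :
    connBySet G Von I C C' ↔ ∃ b : I, LinkedBy G Von C b ∧ adjComp G Von b C' := by
  constructor
  · rintro ⟨k, v, hvI, hfirst, hlast, hstep⟩
    exact ⟨⟨v (Fin.last k), hvI _⟩, ⟨⟨v 0, hvI 0⟩, hfirst,
      reflTransGen_iff_exists_fin.2 ⟨k, fun i => ⟨v i, hvI i⟩, rfl, rfl, hstep⟩⟩, hlast⟩
  · rintro ⟨b, ⟨a, hfirst, hab⟩, hlast⟩
    obtain ⟨k, v, rfl, rfl, hstep⟩ := reflTransGen_iff_exists_fin.1 hab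
    exact ⟨k, fun i => v i, fun i => (v i).2, hfirst, hlast, hstep⟩

theorem LinkedBy.tail {w w' : I} (h : LinkedBy G Von C w) (hww' : connViaComp G Von w w') :
    LinkedBy G Von C w' := by
  obtain ⟨a, ha, haw⟩ := h
  exact ⟨a, ha, haw.tail hww'⟩

theorem linkedBy_of_adjComp {w : I} (hC : C = C' ∨ connBySet G Von I C C')
    (hw : adjComp G Von w C') : LinkedBy G Von C w := by
  rcases hC with rfl | hC
  · exact ⟨w, hw, .refl⟩
  · obtain ⟨b, hb, hbC'⟩ := connBySet_iff_exists_linkedBy.1 hC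
    exact hb.tail (.inl ⟨C', hbC', hw⟩)

theorem eq_or_connBySet_and_linkedBy_of_reachable {u : Von} {w : ↥(Von ∪ I)}
    (h : (G.induce (Von ∪ I)).Reachable ⟨u, .inl u.2⟩ w) :
    (∀ hw : ↑w ∈ Von,
      (G.induce Von).connectedComponentMk u = (G.induce Von).connectedComponentMk ⟨w, hw⟩ ∨
        connBySet G Von I ((G.induce Von).connectedComponentMk u)
          ((G.induce Von).connectedComponentMk ⟨w, hw⟩)) ∧
    (∀ hw : ↑w ∈ I, ↑w ∉ Von →
      LinkedBy G Von ((G.induce Von).connectedComponentMk u) ⟨w, hw⟩) := by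
  rw [reachable_iff_reflTransGen] at h
  induction h with
  | refl => exact ⟨fun _ => .inl rfl, fun _ hu => absurd u.2 hu⟩
  | @tail b c _ hbc ih =>
    obtain ⟨ihVon, ihI⟩ := ih
    have hadj : G.Adj b c := hbc
    by_cases hb : ↑b ∈ Von
    · refine ⟨fun hc => ?_, fun _ _ => linkedBy_of_adjComp (ihVon hb) ⟨⟨b, hb⟩, rfl, hadj⟩⟩
      have same_component : (G.induce Von).connectedComponentMk ⟨b, hb⟩ =
          (G.induce Von).connectedComponentMk ⟨c, hc⟩ :=
        ConnectedComponent.connectedComponentMk_eq_of_adj hadj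
      exact same_component ▸ ihVon hb
    · have hbI : ↑b ∈ I := b.2.resolve_left hb
      have b_linked := ihI hbI hb
      refine ⟨fun hc => .inr ?_, fun _ _ => b_linked.tail (.inr hadj)⟩
      exact connBySet_iff_exists_linkedBy.2 ⟨⟨b, hbI⟩, b_linked, ⟨c, hc⟩, rfl, hadj.symm⟩

end Linked

section Reachable

variable {G : SimpleGraph V} {Von I T : Set V}

theorem reachable_induce_mono (hVon : Von ⊆ T) {x y : Von} (h : (G.induce Von).Reachable x y) :
    (G.induce T).Reachable ⟨x, hVon x.2⟩ ⟨y, hVon y.2⟩ :=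
  h.map (G.induceHomOfLE hVon).toHom

theorem adjComp.reachable (hVon : Von ⊆ T) {x : Von} {w : T}
    (h : adjComp G Von w ((G.induce Von).connectedComponentMk x)) :
    (G.induce T).Reachable ⟨x, hVon x.2⟩ w := by
  obtain ⟨y, hyx, hyw⟩ := h
  have y_adj_w : (G.induce T).Adj ⟨y, hVon y.2⟩ w := hyw
  exact (reachable_induce_mono hVon (ConnectedComponent.exact hyx.symm)).trans y_adj_w.reachable

theorem connViaComp.reachable (hVon : Von ⊆ T) {x y : T} (h : connViaComp G Von x y) :
    (G.induce T).Reachable x y := by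
  rcases h with ⟨C, hx, hy⟩ | hadj
  · induction C using ConnectedComponent.ind with
    | h z => exact (hx.reachable hVon).symm.trans (hy.reachable hVon)
  · exact Adj.reachable (G := G.induce T) hadj

theorem LinkedBy.reachable (hVon : Von ⊆ T) (hI : I ⊆ T) {x : Von} {w : I}
    (h : LinkedBy G Von ((G.induce Von).connectedComponentMk x) w) :
    (G.induce T).Reachable ⟨x, hVon x.2⟩ ⟨w, hI w.2⟩ := by
  obtain ⟨a, ha, haw⟩ := h
  induction haw with
  | refl => exact adjComp.reachable (w := ⟨a, hI a.2⟩) hVon ha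
  | @tail b c _ hbc ih =>
    exact ih.trans (connViaComp.reachable (x := ⟨b, hI b.2⟩) (y := ⟨c, hI c.2⟩) hVon hbc)

theorem connBySet.reachable (hVon : Von ⊆ T) (hI : I ⊆ T) {x y : Von}
    (h : connBySet G Von I ((G.induce Von).connectedComponentMk x)
      ((G.induce Von).connectedComponentMk y)) :
    (G.induce T).Reachable ⟨x, hVon x.2⟩ ⟨y, hVon y.2⟩ := by
  obtain ⟨b, hb, hby⟩ := connBySet_iff_exists_linkedBy.1 h
  exact (hb.reachable hVon hI).trans (adjComp.reachable (w := ⟨b, hI b.2⟩) hVon hby).symm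

end Reachable

theorem stmt0_general (G : SimpleGraph V) (Von I : Set V) (u v : Von) :
    (G.induce (Von ∪ I)).Reachable ⟨u, .inl u.2⟩ ⟨v, .inl v.2⟩ ↔
      (G.induce Von).Reachable u v ∨
        connBySet G Von I ((G.induce Von).connectedComponentMk u)
          ((G.induce Von).connectedComponentMk v) := by
  constructor
  · intro h
    exact ((eq_or_connBySet_and_linkedBy_of_reachable h).1 v.2).imp_left ConnectedComponent.exact
  · rintro (h | h)
    · exact reachable_induce_mono Set.subset_union_left h
    · exact h.reachable Set.subset_union_left Set.subset_union_right

theorem stmt0 [Fintype V] (G : SimpleGraph V) (Von Voff : Set V)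
    (hdisj : Disjoint Von Voff) (hcover : Von ∪ Voff = Set.univ)
    (I : Set V) (hI : I ⊆ Voff)
    (u v : V) (hu : u ∈ Von) (hv : v ∈ Von)
    (hnc : ¬ (G.induce Von).Reachable ⟨u, hu⟩ ⟨v, hv⟩) :
    (G.induce (Von ∪ I)).Reachable ⟨u, Or.inl hu⟩ ⟨v, Or.inl hv⟩ ↔
      connBySet G Von I ((G.induce Von).connectedComponentMk ⟨u, hu⟩)
        ((G.induce Von).connectedComponentMk ⟨v, hv⟩) :=
  (stmt0_general G Von I ⟨u, hu⟩ ⟨v, hv⟩).trans (or_iff_right hnc)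
end

section
/- Let G be a finite simple graph on vertex set V, partitioned into activated vertices V_on and deactivated vertices V_off, and let G_on = G[V_on]. Let I ⊆ V_off, and let u and v be two vertices of V_on lying in distinct connected components C_u ≠ C_v of G_on. If u and v are connected by a path in the induced subgraph G[V_on ∪ I], then C_u and C_v are connected by the set I. -/
/-! Follow a walk from `u` to `v` in `G[Von ∪ I]` and record the deactivated vertices it meets.
Two consecutive recorded vertices are either joined by an edge or separated by a stretch of
activated vertices, which stays inside one component of `G[Von]` adjacent to both. The first and
last recorded vertices are adjacent to the components of `u` and `v`, and at least one vertex is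
recorded because these components differ. -/

open SimpleGraph

variable {V : Type*}

section Chains

variable {G : SimpleGraph V} {Von I : Set V} {C D : (G.induce Von).ConnectedComponent} {w x y : V}

theorem adjComp_connectedComponentMk (hx : x ∈ Von) (hxw : G.Adj x w) :
    adjComp G Von w ((G.induce Von).connectedComponentMk ⟨x, hx⟩) :=
  ⟨⟨x, hx⟩, rfl, hxw⟩

/-- The vertex `w` ends a sequence of vertices of `I` that starts next to the component `C` and
whose consecutive vertices are connected via a component. This is `connBySet` without the final
adjacency to a second component, so that sequences can be built one vertex at a time. -/
def ChainFrom (G : SimpleGraph V) (Von I : Set V) (C : (G.induce Von).ConnectedComponent)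
    (w : V) : Prop :=
  ∃ p : RelSeries {e : I × I | connViaComp G Von e.1 e.2},
    adjComp G Von p.head C ∧ (p.last : V) = w

theorem ChainFrom.of_adjComp (hw : w ∈ I) (hwC : adjComp G Von w C) : ChainFrom G Von I C w :=
  ⟨RelSeries.singleton _ ⟨w, hw⟩, hwC, rfl⟩

theorem ChainFrom.trans_connViaComp (hx : ChainFrom G Von I C x) (hy : y ∈ I)
    (hxy : connViaComp G Von x y) : ChainFrom G Von I C y := by
  obtain ⟨p, hpC, rfl⟩ := hx
  refine ⟨p.snoc ⟨y, hy⟩ hxy, ?_, ?_⟩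
  · rwa [RelSeries.head_snoc]
  · rw [RelSeries.last_snoc]

theorem connBySet_iff_exists_chainFrom :
    connBySet G Von I C D ↔ ∃ w, ChainFrom G Von I C w ∧ adjComp G Von w D := by
  constructor
  · rintro ⟨k, s, hsI, hC, hD, hs⟩
    exact ⟨s (Fin.last k), ⟨⟨k, fun i => ⟨s i, hsI i⟩, hs⟩, hC, rfl⟩, hD⟩
  · rintro ⟨_, ⟨p, hC, rfl⟩, hD⟩
    exact ⟨p.length, fun i => p i, fun i => (p i).2, hC, hD, p.step⟩

theorem ChainFrom.of_eq_or_connBySet (hD : D = C ∨ connBySet G Von I C D) (hw : w ∈ I)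
    (hwD : adjComp G Von w D) : ChainFrom G Von I C w := by
  rcases hD with rfl | hCD
  · exact .of_adjComp hw hwD
  · obtain ⟨t, hCt, htD⟩ := connBySet_iff_exists_chainFrom.1 hCD
    exact hCt.trans_connViaComp hw (.inl ⟨D, htD, hwD⟩)

/-- The invariant along walks in `G[Von ∪ I]` that start in the component `C`: an activated vertex
lies in `C` or in a component connected to `C` by `I`, and a deactivated vertex ends a chain from
`C`. Vertices of `I ∩ Von` count as activated. -/
structure ReachedFrom (G : SimpleGraph V) (Von I : Set V) (C : (G.induce Von).ConnectedComponent)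
    (x : V) : Prop where
  eq_or_connBySet (hx : x ∈ Von) :
    (G.induce Von).connectedComponentMk ⟨x, hx⟩ = C ∨
      connBySet G Von I C ((G.induce Von).connectedComponentMk ⟨x, hx⟩)
  chainFrom (hx : x ∉ Von) : ChainFrom G Von I C x

theorem ReachedFrom.refl (hx : x ∈ Von) :
    ReachedFrom G Von I ((G.induce Von).connectedComponentMk ⟨x, hx⟩) x :=
  ⟨fun _ => .inl rfl, fun hx' => absurd hx hx'⟩

theorem ReachedFrom.trans_adj (h : ReachedFrom G Von I C x) (hy : y ∈ Von ∪ I)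
    (hxy : G.Adj x y) : ReachedFrom G Von I C y where
  eq_or_connBySet hyon := by
    by_cases hxon : x ∈ Von
    · have hcomp : (G.induce Von).connectedComponentMk ⟨y, hyon⟩ =
          (G.induce Von).connectedComponentMk ⟨x, hxon⟩ :=
        ConnectedComponent.connectedComponentMk_eq_of_adj hxy.symm
      rw [hcomp]
      exact h.eq_or_connBySet hxon
    · exact .inr (connBySet_iff_exists_chainFrom.2
        ⟨x, h.chainFrom hxon, adjComp_connectedComponentMk hyon hxy.symm⟩)
  chainFrom hyoff := by
    have hyI : y ∈ I := hy.resolve_left hyoff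
    by_cases hxon : x ∈ Von
    · exact .of_eq_or_connBySet (h.eq_or_connBySet hxon) hyI
        (adjComp_connectedComponentMk hxon hxy)
    · exact (h.chainFrom hxon).trans_connViaComp hyI (.inr hxy)

theorem ReachedFrom.trans_reachable {a b : ↥(Von ∪ I)} (ha : ReachedFrom G Von I C a)
    (hab : (G.induce (Von ∪ I)).Reachable a b) : ReachedFrom G Von I C b := by
  obtain ⟨p⟩ := hab
  induction p with
  | nil => exact ha
  | @cons _ c _ hac _ ih => exact ih (ha.trans_adj c.2 hac)

end Chains

theorem stmt1_general (G : SimpleGraph V) (Von I : Set V)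
    (u v : V) (hu : u ∈ Von) (hv : v ∈ Von)
    (hne : (G.induce Von).connectedComponentMk ⟨u, hu⟩ ≠
      (G.induce Von).connectedComponentMk ⟨v, hv⟩)
    (hreach : (G.induce (Von ∪ I)).Reachable ⟨u, Or.inl hu⟩ ⟨v, Or.inl hv⟩) :
    connBySet G Von I ((G.induce Von).connectedComponentMk ⟨u, hu⟩)
      ((G.induce Von).connectedComponentMk ⟨v, hv⟩) := by
  have hv_reached : ReachedFrom G Von I ((G.induce Von).connectedComponentMk ⟨u, hu⟩) v :=
    (ReachedFrom.refl hu).trans_reachable hreach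
  exact (hv_reached.eq_or_connBySet hv).resolve_left hne.symm

theorem stmt1 [Fintype V] (G : SimpleGraph V) (Von Voff : Set V)
    (hdisj : Disjoint Von Voff) (hcover : Von ∪ Voff = Set.univ)
    (I : Set V) (hI : I ⊆ Voff)
    (u v : V) (hu : u ∈ Von) (hv : v ∈ Von)
    (hne : (G.induce Von).connectedComponentMk ⟨u, hu⟩ ≠
      (G.induce Von).connectedComponentMk ⟨v, hv⟩)
    (hreach : (G.induce (Von ∪ I)).Reachable ⟨u, Or.inl hu⟩ ⟨v, Or.inl hv⟩) :
    connBySet G Von I ((G.induce Von).connectedComponentMk ⟨u, hu⟩)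
      ((G.induce Von).connectedComponentMk ⟨v, hv⟩) :=
  stmt1_general G Von I u v hu hv hne hreach
end
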